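/- There is a constant C ≥ 1 such that for every x ∈ ℝ^N and all 0 < r₁ ≤ r₂, C^{−1} (r₂/r₁)^N ≤ w(B(x, r₂)) / w(B(x, r₁)) ≤ C (r₂/r₁)^𝐍. -/

import Mathlib

open MeasureTheory Metric
open scoped ENNReal RealInnerProductSpace BigOperators

noncomputable section

/-- The reflection `σ_α` in the hyperplane orthogonal to `α`. -/
def dunklReflect {N : ℕ} (α x : EuclideanSpace ℝ (Fin N)) : EuclideanSpace ℝ (Fin N) :=
  x - (2 * ⟪x, α⟫ / ‖α‖ ^ 2) • α

/-- The Dunkl weight measure `dw` with density `∏_{α ∈ R} |⟨x,α⟩|^{k α}`. -/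
def dunklMeasure (N : ℕ) (R : Finset (EuclideanSpace ℝ (Fin N)))
    (k : EuclideanSpace ℝ (Fin N) → ℝ) : Measure (EuclideanSpace ℝ (Fin N)) :=
  (volume : Measure (EuclideanSpace ℝ (Fin N))).withDensity fun x =>
    ENNReal.ofReal (∏ α ∈ R, |⟪x, α⟫| ^ (k α))

/-- The homogeneous dimension `𝐍 = N + Σ_{α ∈ R} k(α)`. -/
def homDim (N : ℕ) (R : Finset (EuclideanSpace ℝ (Fin N)))
    (k : EuclideanSpace ℝ (Fin N) → ℝ) : ℝ :=
  N + ∑ α ∈ R, k α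

/-!
Consider a finite family of functionals `ℓ i` with exponents `k i ≥ 0`; for the Dunkl weight these
are the inner products with the roots. On `ball x r` the weight `∏ |ℓ i z| ^ k i` is at most
`W x r = ∏ (|ℓ i x| + r ‖ℓ i‖) ^ k i`. Conversely, avoiding thin slabs around the kernels one at a
time, one finds inside `ball x r` a ball of comparable radius on which the weight is comparable to
`W x r`. Hence the weighted measure of `ball x r` is comparable to `W x r * μ (ball x r)`. Here
`μ (ball x r)` is a multiple of `r ^ d`, with `d` the dimension, while `W x r` is nondecreasing and
`W x r / r ^ ∑ k i` is nonincreasing in `r`.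
-/

section Functional

variable {E : Type*} [NormedAddCommGroup E] [NormedSpace ℝ E] {x z : E} {r : ℝ}

theorem abs_apply_le_of_mem_ball (f : StrongDual ℝ E) (hz : z ∈ ball x r) :
    |f z| ≤ |f x| + r * ‖f‖ := by
  have hdiff : |f (z - x)| ≤ r * ‖f‖ := by
    rw [mul_comm]
    exact f.le_opNorm_of_le (mem_ball_iff_norm.1 hz).le
  calc |f z| = |f x + f (z - x)| := by rw [← map_add, add_sub_cancel]
    _ ≤ |f x| + r * ‖f‖ := (abs_add_le _ _).trans (by gcongr)

theorem exists_norm_le_one_opNorm_le_two_mul_abs (f : StrongDual ℝ E) :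
    ∃ v, ‖v‖ ≤ 1 ∧ ‖f‖ ≤ 2 * |f v| := by
  rcases (norm_nonneg f).eq_or_lt with hf | hf
  · exact ⟨0, by simp, by simp [← hf]⟩
  · obtain ⟨v, hv, hfv⟩ := f.exists_lt_apply_of_lt_opNorm (half_lt_self hf)
    rw [Real.norm_eq_abs] at hfv
    exact ⟨v, hv.le, by linarith⟩

/- Moving by `r / 2` in one of two opposite directions leaves the slab around the kernel of `f`. -/
theorem exists_dist_le_half_mul_opNorm_le_abs (f : StrongDual ℝ E) (x : E) (hr : 0 ≤ r) :
    ∃ y, dist y x ≤ r / 2 ∧ r * ‖f‖ ≤ 4 * |f y| := by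
  obtain ⟨v, hv, hfv⟩ := exists_norm_le_one_opNorm_le_two_mul_abs f
  have hshift : ‖(r / 2) • v‖ ≤ r / 2 := by
    rw [norm_smul, Real.norm_of_nonneg (by positivity)]
    exact mul_le_of_le_one_right (by positivity) hv
  have hsum : r * ‖f‖ ≤ 2 * (|f (x + (r / 2) • v)| + |f (x - (r / 2) • v)|) :=
    calc r * ‖f‖ ≤ r * (2 * |f v|) := by gcongr
      _ = 2 * |f (x + (r / 2) • v) - f (x - (r / 2) • v)| := by
          rw [← map_sub, add_sub_sub_cancel, ← add_smul, add_halves, map_smul, smul_eq_mul,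
            abs_mul, abs_of_nonneg hr]
          ring
      _ ≤ 2 * (|f (x + (r / 2) • v)| + |f (x - (r / 2) • v)|) := by
          gcongr
          exact norm_sub_le (f _) (f _)
  rcases le_total |f (x - (r / 2) • v)| |f (x + (r / 2) • v)| with h | h
  · exact ⟨x + (r / 2) • v, by simpa [dist_eq_norm] using hshift, by linarith⟩
  · exact ⟨x - (r / 2) • v, by simpa [dist_eq_norm] using hshift, by linarith⟩

theorem exists_ball_subset_ball_mul_opNorm_le_abs (f : StrongDual ℝ E) (x : E) (hr : 0 ≤ r) :
    ∃ y, ball y (r / 8) ⊆ ball x r ∧ ∀ z ∈ ball y (r / 8), r * ‖f‖ ≤ 8 * |f z| := by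
  obtain ⟨y, hyx, hfy⟩ := exists_dist_le_half_mul_opNorm_le_abs f x hr
  refine ⟨y, ball_subset_ball' (by linarith), fun z hz => ?_⟩
  have := abs_apply_le_of_mem_ball f (mem_ball_comm.1 hz)
  linarith

theorem exists_ball_subset_ball_forall_mul_opNorm_le_abs {ι : Type*} (s : Finset ι)
    (ℓ : ι → StrongDual ℝ E) (x : E) (hr : 0 ≤ r) :
    ∃ y, ball y (r / 8 ^ s.card) ⊆ ball x r ∧
      ∀ z ∈ ball y (r / 8 ^ s.card), ∀ i ∈ s, r * ‖ℓ i‖ ≤ 8 ^ s.card * |ℓ i z| := by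
  induction s using Finset.cons_induction with
  | empty => exact ⟨x, by simp, by simp⟩
  | cons j s hj ih =>
    obtain ⟨y, hyx, hy⟩ := ih
    obtain ⟨y', hy'y, hy'⟩ :=
      exists_ball_subset_ball_mul_opNorm_le_abs (ℓ j) y (r := r / 8 ^ s.card) (by positivity)
    rw [Finset.card_cons, pow_succ, ← div_div]
    refine ⟨y', hy'y.trans hyx, fun z hz => (Finset.forall_mem_cons hj _).2 ⟨?_, fun i hi => ?_⟩⟩
    · have := hy' z hz
      rwa [div_mul_eq_mul_div, div_le_iff₀' (by positivity), ← mul_assoc] at this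
    · refine (hy z (hy'y hz) i hi).trans ?_
      gcongr
      exact le_mul_of_one_le_right (by positivity) (by norm_num)

end Functional

theorem prod_rpow_le_rpow_sum_mul_prod_rpow {ι : Type*} {s : Finset ι} {a b k : ι → ℝ} {t : ℝ}
    (ht : 0 < t) (ha : ∀ i ∈ s, 0 ≤ a i) (hb : ∀ i ∈ s, 0 ≤ b i) (hk : ∀ i ∈ s, 0 ≤ k i)
    (hab : ∀ i ∈ s, a i ≤ t * b i) :
    ∏ i ∈ s, a i ^ k i ≤ t ^ (∑ i ∈ s, k i) * ∏ i ∈ s, b i ^ k i := by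
  rw [Real.rpow_sum_of_pos ht, ← Finset.prod_mul_distrib]
  refine Finset.prod_le_prod (fun i hi => Real.rpow_nonneg (ha i hi) _) fun i hi => ?_
  rw [← Real.mul_rpow ht.le (hb i hi)]
  exact Real.rpow_le_rpow (ha i hi) (hab i hi) (hk i hi)

section Weight

variable {E ι : Type*} [NormedAddCommGroup E] [NormedSpace ℝ E]
  {s : Finset ι} {ℓ : ι → StrongDual ℝ E} {k : ι → ℝ} {x z : E} {r r₁ r₂ : ℝ}

/-- The weight `∏_{i ∈ s} |ℓ i x| ^ k i`, which is the Dunkl weight when the `ℓ i` are the inner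
products with the roots. -/
def functionalWeight (s : Finset ι) (ℓ : ι → StrongDual ℝ E) (k : ι → ℝ) (x : E) : ℝ :=
  ∏ i ∈ s, |ℓ i x| ^ k i

/-- The size of `functionalWeight` at scale `r` around `x`: each factor `|ℓ i x|` is replaced by
`|ℓ i x| + r * ‖ℓ i‖`, the supremum of `|ℓ i|` over `ball x r` for `0 < r`. -/
def weightMajorant (s : Finset ι) (ℓ : ι → StrongDual ℝ E) (k : ι → ℝ) (x : E) (r : ℝ) : ℝ :=
  ∏ i ∈ s, (|ℓ i x| + r * ‖ℓ i‖) ^ k i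

theorem functionalWeight_le_weightMajorant (hk : ∀ i ∈ s, 0 ≤ k i) (hz : z ∈ ball x r) :
    functionalWeight s ℓ k z ≤ weightMajorant s ℓ k x r :=
  Finset.prod_le_prod (fun _ _ => by positivity) fun i hi =>
    Real.rpow_le_rpow (abs_nonneg _) (abs_apply_le_of_mem_ball (ℓ i) hz) (hk i hi)

theorem weightMajorant_mono (hk : ∀ i ∈ s, 0 ≤ k i) (hr₁ : 0 ≤ r₁) (hr : r₁ ≤ r₂) :
    weightMajorant s ℓ k x r₁ ≤ weightMajorant s ℓ k x r₂ :=
  Finset.prod_le_prod (fun _ _ => by positivity) fun i hi =>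
    Real.rpow_le_rpow (by positivity) (by gcongr) (hk i hi)

theorem weightMajorant_le_rpow_mul (hk : ∀ i ∈ s, 0 ≤ k i) (hr₁ : 0 < r₁) (hr : r₁ ≤ r₂) :
    weightMajorant s ℓ k x r₂ ≤ (r₂ / r₁) ^ (∑ i ∈ s, k i) * weightMajorant s ℓ k x r₁ := by
  have hr₂ : 0 < r₂ := hr₁.trans_le hr
  refine prod_rpow_le_rpow_sum_mul_prod_rpow (by positivity) (fun _ _ => by positivity)
    (fun _ _ => by positivity) hk fun i _ => ?_
  rw [mul_add, ← mul_assoc, div_mul_cancel₀ _ hr₁.ne']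
  gcongr
  exact le_mul_of_one_le_left (abs_nonneg _) ((one_le_div hr₁).2 hr)

theorem weightMajorant_le_rpow_mul_functionalWeight {A : ℝ} (hA : 0 ≤ A) (hr : 0 ≤ r)
    (hk : ∀ i ∈ s, 0 ≤ k i) (hz : z ∈ ball x r) (hlow : ∀ i ∈ s, r * ‖ℓ i‖ ≤ A * |ℓ i z|) :
    weightMajorant s ℓ k x r ≤ (1 + 2 * A) ^ (∑ i ∈ s, k i) * functionalWeight s ℓ k z := by
  refine prod_rpow_le_rpow_sum_mul_prod_rpow (by positivity) (fun _ _ => by positivity)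
    (fun _ _ => abs_nonneg _) hk fun i hi => ?_
  have := abs_apply_le_of_mem_ball (ℓ i) (mem_ball_comm.1 hz)
  linarith [hlow i hi]

end Weight

section Measure

variable {E ι : Type*} [NormedAddCommGroup E] [NormedSpace ℝ E] [MeasurableSpace E] [BorelSpace E]
  {μ : Measure E} {s : Finset ι} {ℓ : ι → StrongDual ℝ E} {k : ι → ℝ} {x : E} {r r₁ r₂ : ℝ}

/-- The measure with density `functionalWeight s ℓ k` with respect to `μ`, which generalizes
`dunklMeasure`. -/
def functionalWeightMeasure (μ : Measure E) (s : Finset ι) (ℓ : ι → StrongDual ℝ E) (k : ι → ℝ) :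
    Measure E :=
  μ.withDensity fun x => ENNReal.ofReal (functionalWeight s ℓ k x)

/-- The product of `μ (ball x r)` and the size of the weight at scale `r`, the model for the
weighted measure of `ball x r`. -/
def ballMajorant (μ : Measure E) (s : Finset ι) (ℓ : ι → StrongDual ℝ E) (k : ι → ℝ) (x : E)
    (r : ℝ) : ℝ≥0∞ :=
  ENNReal.ofReal (weightMajorant s ℓ k x r) * μ (ball x r)

theorem functionalWeightMeasure_ball_le_ballMajorant (hk : ∀ i ∈ s, 0 ≤ k i) :
    functionalWeightMeasure μ s ℓ k (ball x r) ≤ ballMajorant μ s ℓ k x r := by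
  rw [functionalWeightMeasure, withDensity_apply _ measurableSet_ball, ballMajorant,
    ← setLIntegral_const]
  exact setLIntegral_mono' measurableSet_ball fun _ hz =>
    ENNReal.ofReal_le_ofReal (functionalWeight_le_weightMajorant hk hz)

variable [FiniteDimensional ℝ E] [μ.IsAddHaarMeasure]

theorem addHaar_ball_eq_div_pow_mul (x y : E) (hr₁ : 0 < r₁) (hr₂ : 0 < r₂) :
    μ (ball x r₂) = ENNReal.ofReal ((r₂ / r₁) ^ Module.finrank ℝ E) * μ (ball y r₁) := by
  rw [Measure.addHaar_ball_center μ y, ← Measure.addHaar_ball_mul_of_pos μ x (div_pos hr₂ hr₁),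
    div_mul_cancel₀ _ hr₁.ne']

theorem pow_finrank_mul_ballMajorant_le (hk : ∀ i ∈ s, 0 ≤ k i) (hr₁ : 0 < r₁) (hr : r₁ ≤ r₂) :
    ENNReal.ofReal ((r₂ / r₁) ^ Module.finrank ℝ E) * ballMajorant μ s ℓ k x r₁ ≤
      ballMajorant μ s ℓ k x r₂ := by
  rw [ballMajorant, ballMajorant, mul_left_comm,
    ← addHaar_ball_eq_div_pow_mul x x hr₁ (hr₁.trans_le hr)]
  gcongr
  exact weightMajorant_mono hk hr₁.le hr

theorem ballMajorant_le_rpow_mul (hk : ∀ i ∈ s, 0 ≤ k i) (hr₁ : 0 < r₁) (hr : r₁ ≤ r₂) :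
    ballMajorant μ s ℓ k x r₂ ≤
      ENNReal.ofReal ((r₂ / r₁) ^ (Module.finrank ℝ E + ∑ i ∈ s, k i)) *
        ballMajorant μ s ℓ k x r₁ := by
  have hr₂ : 0 < r₂ := hr₁.trans_le hr
  calc ballMajorant μ s ℓ k x r₂
      ≤ ENNReal.ofReal ((r₂ / r₁) ^ (∑ i ∈ s, k i) * weightMajorant s ℓ k x r₁) *
          (ENNReal.ofReal ((r₂ / r₁) ^ Module.finrank ℝ E) * μ (ball x r₁)) := by
        rw [ballMajorant, addHaar_ball_eq_div_pow_mul x x hr₁ hr₂]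
        gcongr
        exact weightMajorant_le_rpow_mul hk hr₁ hr
    _ = ENNReal.ofReal ((r₂ / r₁) ^ (Module.finrank ℝ E + ∑ i ∈ s, k i)) *
          ballMajorant μ s ℓ k x r₁ := by
        rw [ballMajorant, Real.rpow_add (by positivity), Real.rpow_natCast,
          ENNReal.ofReal_mul (by positivity), ENNReal.ofReal_mul (by positivity)]
        ring

theorem exists_ballMajorant_le_mul_functionalWeightMeasure_ball (hk : ∀ i ∈ s, 0 ≤ k i) :
    ∃ C : ℝ, 1 ≤ C ∧ ∀ (x : E) (r : ℝ), 0 < r →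
      ballMajorant μ s ℓ k x r ≤
        ENNReal.ofReal C * functionalWeightMeasure μ s ℓ k (ball x r) := by
  set T : ℝ := 8 ^ s.card
  have hT : 1 ≤ T := one_le_pow₀ (by norm_num)
  set B : ℝ := (1 + 2 * T) ^ (∑ i ∈ s, k i)
  have hB : 1 ≤ B := Real.one_le_rpow (by linarith) (Finset.sum_nonneg hk)
  refine ⟨T ^ Module.finrank ℝ E * B, one_le_mul_of_one_le_of_one_le (one_le_pow₀ hT) hB,
    fun x r hr => ?_⟩
  obtain ⟨y, hyx, hy⟩ := exists_ball_subset_ball_forall_mul_opNorm_le_abs s ℓ x hr.le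
  have hweight : ∀ z ∈ ball y (r / T),
      ENNReal.ofReal (weightMajorant s ℓ k x r) ≤
        ENNReal.ofReal B * ENNReal.ofReal (functionalWeight s ℓ k z) := fun z hz => by
    rw [← ENNReal.ofReal_mul (by positivity)]
    exact ENNReal.ofReal_le_ofReal <|
      weightMajorant_le_rpow_mul_functionalWeight (by positivity) hr.le hk (hyx hz) (hy z hz)
  have hball : ENNReal.ofReal (weightMajorant s ℓ k x r) * μ (ball y (r / T)) ≤
      ENNReal.ofReal B * functionalWeightMeasure μ s ℓ k (ball x r) := by
    rw [← setLIntegral_const, functionalWeightMeasure, withDensity_apply _ measurableSet_ball,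
      ← lintegral_const_mul' _ _ ENNReal.ofReal_ne_top]
    exact (setLIntegral_mono' measurableSet_ball hweight).trans (lintegral_mono_set hyx)
  calc ballMajorant μ s ℓ k x r
      = ENNReal.ofReal (T ^ Module.finrank ℝ E) *
          (ENNReal.ofReal (weightMajorant s ℓ k x r) * μ (ball y (r / T))) := by
        rw [ballMajorant, addHaar_ball_eq_div_pow_mul x y (div_pos hr (by positivity)) hr,
          div_div_cancel₀ hr.ne', mul_left_comm]
    _ ≤ ENNReal.ofReal (T ^ Module.finrank ℝ E) *
          (ENNReal.ofReal B * functionalWeightMeasure μ s ℓ k (ball x r)) := by gcongr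
    _ = ENNReal.ofReal (T ^ Module.finrank ℝ E * B) *
          functionalWeightMeasure μ s ℓ k (ball x r) := by
        rw [ENNReal.ofReal_mul (by positivity), mul_assoc]

end Measure

theorem dunklMeasure_ball_growth_general {E ι : Type*} [NormedAddCommGroup E] [NormedSpace ℝ E]
    [FiniteDimensional ℝ E] [MeasurableSpace E] [BorelSpace E] (μ : Measure E)
    [μ.IsAddHaarMeasure] (s : Finset ι) (ℓ : ι → StrongDual ℝ E) (k : ι → ℝ)
    (hk : ∀ i ∈ s, 0 ≤ k i) :
    ∃ C : ℝ, 1 ≤ C ∧ ∀ (x : E) (r₁ r₂ : ℝ), 0 < r₁ → r₁ ≤ r₂ →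
      ENNReal.ofReal (C⁻¹ * (r₂ / r₁) ^ Module.finrank ℝ E) *
            functionalWeightMeasure μ s ℓ k (ball x r₁) ≤
          functionalWeightMeasure μ s ℓ k (ball x r₂) ∧
        functionalWeightMeasure μ s ℓ k (ball x r₂) ≤
          ENNReal.ofReal (C * (r₂ / r₁) ^ (Module.finrank ℝ E + ∑ i ∈ s, k i)) *
            functionalWeightMeasure μ s ℓ k (ball x r₁) := by
  obtain ⟨C, hC, hlower⟩ :=
    exists_ballMajorant_le_mul_functionalWeightMeasure_ball (μ := μ) (ℓ := ℓ) hk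
  have hC₀ : 0 < C := one_pos.trans_le hC
  refine ⟨C, hC, fun x r₁ r₂ hr₁ hr => ?_⟩
  have hr₂ : 0 < r₂ := hr₁.trans_le hr
  constructor
  · rw [ENNReal.ofReal_mul (by positivity), ENNReal.ofReal_inv_of_pos hC₀, mul_assoc,
      ENNReal.inv_mul_le_iff (by simpa using hC₀) ENNReal.ofReal_ne_top]
    calc _ ≤ ENNReal.ofReal ((r₂ / r₁) ^ Module.finrank ℝ E) * ballMajorant μ s ℓ k x r₁ := by
            gcongr; exact functionalWeightMeasure_ball_le_ballMajorant hk
      _ ≤ ballMajorant μ s ℓ k x r₂ := pow_finrank_mul_ballMajorant_le hk hr₁ hr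
      _ ≤ _ := hlower x r₂ hr₂
  · rw [mul_comm C, ENNReal.ofReal_mul (by positivity), mul_assoc]
    calc _ ≤ ballMajorant μ s ℓ k x r₂ := functionalWeightMeasure_ball_le_ballMajorant hk
      _ ≤ ENNReal.ofReal ((r₂ / r₁) ^ (Module.finrank ℝ E + ∑ i ∈ s, k i)) *
            ballMajorant μ s ℓ k x r₁ := ballMajorant_le_rpow_mul hk hr₁ hr
      _ ≤ _ := by gcongr; exact hlower x r₁ hr₁

theorem dunklMeasure_eq_functionalWeightMeasure (N : ℕ) (R : Finset (EuclideanSpace ℝ (Fin N)))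
    (k : EuclideanSpace ℝ (Fin N) → ℝ) :
    dunklMeasure N R k = functionalWeightMeasure volume R (innerSL ℝ).flip k :=
  rfl

theorem dunklMeasure_ball_growth
    (N : ℕ) (hN : 1 ≤ N)
    (R : Finset (EuclideanSpace ℝ (Fin N)))
    (k : EuclideanSpace ℝ (Fin N) → ℝ)
    (hR0 : (0 : EuclideanSpace ℝ (Fin N)) ∉ R)
    (hRnorm : ∀ α ∈ R, ‖α‖ = Real.sqrt 2)
    (hRrefl : ∀ α ∈ R, ∀ β ∈ R, dunklReflect α β ∈ R)
    (hk0 : ∀ α ∈ R, 0 ≤ k α)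
    (hkinv : ∀ α ∈ R, ∀ β ∈ R, k (dunklReflect α β) = k β) :
    ∃ C : ℝ, 1 ≤ C ∧ ∀ (x : EuclideanSpace ℝ (Fin N)) (r₁ r₂ : ℝ), 0 < r₁ → r₁ ≤ r₂ →
      ENNReal.ofReal (C⁻¹ * (r₂ / r₁) ^ N) * dunklMeasure N R k (ball x r₁) ≤
          dunklMeasure N R k (ball x r₂) ∧
        dunklMeasure N R k (ball x r₂) ≤
          ENNReal.ofReal (C * (r₂ / r₁) ^ (homDim N R k)) * dunklMeasure N R k (ball x r₁) := by
  simpa only [dunklMeasure_eq_functionalWeightMeasure, homDim, finrank_euclideanSpace_fin] using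
    dunklMeasure_ball_growth_general volume R (innerSL ℝ).flip k hk0
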